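/- arXiv:math/0008076 — 3 statements merged into one kernel-verified Lean document; each statement's English description precedes it below -/
import Mathlib

section
/- Let K be a CM field with CM-type Σ, and let V be a rational Hodge structure of weight k that is of CM-type with field K. For integers r, s ≥ 0 with r + s = k + 1 define W^{r,s} := V^{r-1,s}_Σ ⊕ V^{r,s-1}_{Σ̄} (where a summand is taken to be 0 if r-1 < 0 or s-1 < 0). Then V_ℂ = ⊕_{r+s=k+1} W^{r,s} is a direct sum decomposition and the conjugation map c satisfies c(W^{r,s}) = W^{s,r}; moreover each W^{r,s} is stable under the K-action. In other words, the W^{r,s} define on V a rational Hodge structure of weight k+1 of CM-type with field K (the negative half twist V_{-1/2}). -/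
/-!
The `σ`-eigenspaces `V_σ` of the `K`-action split `V_ℂ`: a primitive element `θ` of `K` over `ℚ` acts
semisimply, since its minimal polynomial is separable, its eigenvalues are among the pairwise
distinct numbers `σ θ`, and its `σ θ`-eigenspace is `V_σ` because every element of `K` is a
polynomial in `θ`. A `K`-stable subspace is the sum of its intersections with the eigenspaces
(`eq_iSup_inf_Vsig`), so `V_ℂ` is the direct sum of the bigraded pieces `V^{p,q} ∩ V_σ`
(`iSupIndep_inf_Vsig`, `iSup_inf_Vsig`).

The negative half twist is a regrouping of these pieces: `V^{p,q} ∩ V_σ` is placed in bidegree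
`(p + 1, q)` if `σ ∈ Σ` and in bidegree `(p, q + 1)` otherwise (`twistDeg`,
`negHalfTwistPiece_eq`). Grouping the summands of a direct sum again gives a direct sum
(`iSupIndep_fibers`). Conjugation maps `V^{p,q} ∩ V_σ` into `V^{q,p} ∩ V_σ̄`, and since exactly one
of `σ`, `σ̄` lies in `Σ`, it swaps the two new degrees. Finally `K` acts on each piece by scalars.
-/

open scoped TensorProduct
open Module

noncomputable section

/-- Scalar multiplication by `x : K` on `V`, as a `ℚ`-linear map. -/
def smulQ (K : Type*) [Field K] [Algebra ℚ K]
    (V : Type*) [AddCommGroup V] [Module ℚ V] [Module K V] [IsScalarTower ℚ K V]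
    (x : K) : V →ₗ[ℚ] V where
  toFun v := x • v
  map_add' := by simp
  map_smul' q v := smul_comm x q v

/-- The `ℂ`-linear extension of the action of `x : K` to the
complexification `V_ℂ = ℂ ⊗_ℚ V`. -/
def actK (K : Type*) [Field K] [Algebra ℚ K]
    (V : Type*) [AddCommGroup V] [Module ℚ V] [Module K V] [IsScalarTower ℚ K V]
    (x : K) : (ℂ ⊗[ℚ] V) →ₗ[ℂ] (ℂ ⊗[ℚ] V) :=
  LinearMap.baseChange ℂ (smulQ K V x)

/-- The eigenspace `V_σ = {v ∈ V_ℂ : x•v = σ(x)v for all x ∈ K}` attached to an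
embedding `σ : K → ℂ`. -/
def Vsig (K : Type*) [Field K] [Algebra ℚ K]
    (V : Type*) [AddCommGroup V] [Module ℚ V] [Module K V] [IsScalarTower ℚ K V]
    (σ : K →+* ℂ) : Submodule ℂ (ℂ ⊗[ℚ] V) :=
  ⨅ x : K, LinearMap.ker (actK K V x - σ x • LinearMap.id)

/-- The conjugation map `c = id_V ⊗ (complex conjugation)` on `V_ℂ = ℂ ⊗_ℚ V`,
as a `ℚ`-linear map. -/
def cmap (V : Type*) [AddCommGroup V] [Module ℚ V] :
    (ℂ ⊗[ℚ] V) →ₗ[ℚ] (ℂ ⊗[ℚ] V) :=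
  TensorProduct.map (Complex.conjAe.toLinearMap.restrictScalars ℚ) LinearMap.id

/-- `V^{p,q}_T := ⊕_{σ ∈ T} (V^{p,q} ∩ V_σ)` for a set `T` of embeddings. -/
def VpqT (K : Type*) [Field K] [Algebra ℚ K]
    (V : Type*) [AddCommGroup V] [Module ℚ V] [Module K V] [IsScalarTower ℚ K V]
    (Vpq : ℕ → ℕ → Submodule ℂ (ℂ ⊗[ℚ] V)) (T : Set (K →+* ℂ)) (p q : ℕ) :
    Submodule ℂ (ℂ ⊗[ℚ] V) :=
  ⨆ σ ∈ T, (Vpq p q ⊓ Vsig K V σ)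

/-- The pieces `W^{r,s} := V^{r-1,s}_Σ ⊕ V^{r,s-1}_{Σ̄}` of the negative half
twist (a summand being `0` when `r-1 < 0` resp. `s-1 < 0`). -/
def negHalfTwistPiece (K : Type*) [Field K] [Algebra ℚ K]
    (V : Type*) [AddCommGroup V] [Module ℚ V] [Module K V] [IsScalarTower ℚ K V]
    (Vpq : ℕ → ℕ → Submodule ℂ (ℂ ⊗[ℚ] V)) (Sg : Set (K →+* ℂ)) (r s : ℕ) :
    Submodule ℂ (ℂ ⊗[ℚ] V) :=
  (if r = 0 then ⊥ else VpqT K V Vpq Sg (r - 1) s) ⊔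
    (if s = 0 then ⊥ else VpqT K V Vpq {σ | (starRingEnd ℂ).comp σ ∈ Sg} r (s - 1))

/-! ### Decomposition of stable subspaces into eigenspaces -/

section Helpers

variable (K : Type*) [Field K] [NumberField K]
  (V : Type*) [AddCommGroup V] [Module ℚ V] [Module K V] [IsScalarTower ℚ K V]

/-- The action of `K` on `V_ℂ` as a ring homomorphism into the `ℂ`-linear endomorphisms. -/
def actKHom : K →+* Module.End ℂ (ℂ ⊗[ℚ] V) where
  toFun x := actK K V x
  map_one' := by
    ext v
    simp [actK, smulQ]
  map_mul' x y := by
    ext v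
    simp [actK, smulQ, mul_smul]
  map_zero' := by
    ext v
    simp [actK, smulQ]
  map_add' x y := by
    ext v
    simp [actK, smulQ, add_smul, TensorProduct.tmul_add]

lemma mem_Vsig {σ : K →+* ℂ} {v : ℂ ⊗[ℚ] V} :
    v ∈ Vsig K V σ ↔ ∀ x, actK K V x v = σ x • v := by
  simp [Vsig, sub_eq_zero]

lemma actK_aeval (θ : K) (f : Polynomial ℚ) :
    actK K V (Polynomial.aeval θ f) =
      Polynomial.aeval (R := ℂ) (A := Module.End ℂ (ℂ ⊗[ℚ] V)) (actK K V θ)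
        (f.map (algebraMap ℚ ℂ)) := by
  change actKHom K V _ = Polynomial.aeval (actKHom K V θ) _
  rw [Polynomial.aeval_def, Polynomial.hom_eval₂, Polynomial.aeval_def, Polynomial.eval₂_map]
  congr 1
  exact RingHom.ext_rat _ _

/-- A primitive element of `K` over `ℚ`. -/
def primElt : K := (Field.powerBasisOfFiniteOfSeparable ℚ K).gen

lemma exists_eq_aeval_primElt (x : K) : ∃ f : Polynomial ℚ, x = Polynomial.aeval (primElt K) f :=
  (Field.powerBasisOfFiniteOfSeparable ℚ K).exists_eq_aeval' x

lemma map_primElt_injective : Function.Injective fun σ : K →+* ℂ => σ (primElt K) := by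
  intro σ τ h
  ext x
  obtain ⟨f, rfl⟩ := exists_eq_aeval_primElt K x
  rw [Polynomial.aeval_def, Polynomial.hom_eval₂, Polynomial.hom_eval₂,
    RingHom.ext_rat (σ.comp (algebraMap ℚ K)) (τ.comp (algebraMap ℚ K))]
  congr 1

lemma Vsig_eq_eigenspace (σ : K →+* ℂ) :
    Vsig K V σ = Module.End.eigenspace (actK K V (primElt K)) (σ (primElt K)) := by
  apply le_antisymm
  · intro v hv
    exact Module.End.mem_eigenspace_iff.2 ((mem_Vsig K V).1 hv _)
  · intro v hv
    rw [mem_Vsig]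
    intro x
    obtain ⟨f, rfl⟩ := exists_eq_aeval_primElt K x
    by_cases h0 : v = 0
    · simp [h0]
    rw [actK_aeval, Module.End.aeval_apply_of_hasEigenvector ⟨hv, h0⟩]
    congr 1
    rw [Polynomial.eval_map, Polynomial.aeval_def, Polynomial.hom_eval₂]
    congr 1
    exact RingHom.ext_rat _ _

lemma iSupIndep_Vsig : iSupIndep (Vsig K V) := by
  have h := (Module.End.eigenspaces_iSupIndep (actK K V (primElt K))).comp
    (map_primElt_injective K)
  convert h using 1
  ext1 σ
  exact Vsig_eq_eigenspace K V σ

lemma actK_primElt_isRoot :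
    Polynomial.aeval (R := ℂ) (A := Module.End ℂ (ℂ ⊗[ℚ] V)) (actK K V (primElt K))
      ((minpoly ℚ (primElt K)).map (algebraMap ℚ ℂ)) = 0 := by
  rw [← actK_aeval, minpoly.aeval]
  exact map_zero (actKHom K V)

/-- Every eigenvalue of the primitive element on `V_ℂ` comes from an embedding of `K`. -/
lemma eigenspace_le_iSup_Vsig (μ : ℂ) (P : Submodule ℂ (ℂ ⊗[ℚ] V)) :
    P ⊓ Module.End.eigenspace (actK K V (primElt K)) μ ≤ ⨆ σ, P ⊓ Vsig K V σ := by
  intro v hv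
  by_cases h0 : v = 0
  · simp [h0]
  have hroot : Polynomial.eval μ ((minpoly ℚ (primElt K)).map (algebraMap ℚ ℂ)) = 0 := by
    have h := Module.End.aeval_apply_of_hasEigenvector ⟨hv.2, h0⟩
      (p := (minpoly ℚ (primElt K)).map (algebraMap ℚ ℂ))
    rw [actK_primElt_isRoot] at h
    exact (smul_eq_zero.1 h.symm).resolve_right h0
  have hmem : μ ∈ (minpoly ℚ (primElt K)).rootSet ℂ := by
    rw [Polynomial.mem_rootSet]
    refine ⟨minpoly.ne_zero (Algebra.IsIntegral.isIntegral _), ?_⟩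
    rwa [Polynomial.eval_map_algebraMap] at hroot
  rw [← NumberField.Embeddings.range_eval_eq_rootSet_minpoly] at hmem
  obtain ⟨σ, rfl⟩ := hmem
  refine Submodule.mem_iSup_of_mem σ ?_
  rw [Vsig_eq_eigenspace]
  exact hv

lemma actK_primElt_isSemisimple [FiniteDimensional ℚ V] :
    Module.End.IsSemisimple (actK K V (primElt K)) := by
  refine Module.End.isSemisimple_of_squarefree_aeval_eq_zero ?_ (actK_primElt_isRoot K V)
  have hsep : (minpoly ℚ (primElt K)).Separable := Algebra.IsSeparable.isSeparable ℚ _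
  exact (hsep.map).squarefree

/-- A subspace stable under `K` is the sum of its intersections with the `V_σ`. -/
lemma eq_iSup_inf_Vsig [FiniteDimensional ℚ V] (P : Submodule ℂ (ℂ ⊗[ℚ] V))
    (hP : ∀ x, Submodule.map (actK K V x) P ≤ P) : P = ⨆ σ, P ⊓ Vsig K V σ := by
  apply le_antisymm
  · have h := Submodule.inf_iSup_genEigenspace (p := P) (f := actK K V (primElt K))
      (fun v hv => hP _ (Submodule.mem_map_of_mem hv)) 1
    have htop := (actK_primElt_isSemisimple K V).iSup_eigenspace_eq_top
    change P ⊓ (⨆ μ, Module.End.eigenspace _ μ) = ⨆ μ, P ⊓ Module.End.eigenspace _ μ at h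
    rw [htop, inf_top_eq] at h
    conv_lhs => rw [h]
    exact iSup_le fun μ => eigenspace_le_iSup_Vsig K V μ P
  · exact iSup_le fun σ => inf_le_left

/-! ### The pieces `V^{p,q} ∩ V_σ` and their regrouping -/

/-- The piece `V^{p,q} ∩ V_σ`, indexed by `((p, q), σ)`. -/
def bipiece (Vpq : ℕ → ℕ → Submodule ℂ (ℂ ⊗[ℚ] V)) (i : (ℕ × ℕ) × (K →+* ℂ)) :
    Submodule ℂ (ℂ ⊗[ℚ] V) :=
  Vpq i.1.1 i.1.2 ⊓ Vsig K V i.2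

open Classical in
/-- The bidegree in the negative half twist of the piece `V^{p,q} ∩ V_σ`:
`(p + 1, q)` for `σ ∈ Σ` and `(p, q + 1)` otherwise. -/
def twistDeg {K : Type*} [Field K] (Sg : Set (K →+* ℂ)) (i : (ℕ × ℕ) × (K →+* ℂ)) : ℕ × ℕ :=
  if i.2 ∈ Sg then (i.1.1 + 1, i.1.2) else (i.1.1, i.1.2 + 1)

lemma iSupIndep_inf_Vsig (Vpq : ℕ → ℕ → Submodule ℂ (ℂ ⊗[ℚ] V))
    (hind : iSupIndep fun pq : ℕ × ℕ => Vpq pq.1 pq.2) : iSupIndep (bipiece K V Vpq) := by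
  rintro ⟨pq, σ⟩
  -- The other pieces either share the bidegree `(p, q)`, or lie in another `V^{p',q'}`.
  have hle : (⨆ j, ⨆ (_ : j ≠ (pq, σ)), bipiece K V Vpq j) ≤
      (Vpq pq.1 pq.2 ⊓ ⨆ τ, ⨆ (_ : τ ≠ σ), Vsig K V τ) ⊔
        ⨆ pq', ⨆ (_ : pq' ≠ pq), Vpq pq'.1 pq'.2 := by
    refine iSup₂_le ?_
    rintro ⟨pq', τ⟩ hne
    by_cases h : pq' = pq
    · subst h
      have hτ : τ ≠ σ := fun h => hne (by rw [h])
      exact le_sup_of_le_left (inf_le_inf_left _ (le_iSup₂_of_le τ hτ le_rfl))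
    · exact le_sup_of_le_right (inf_le_left.trans (le_iSup₂_of_le (f := fun a (_ : a ≠ pq) =>
        Vpq a.1 a.2) pq' h le_rfl))
  refine Disjoint.mono_right hle (Disjoint.disjoint_sup_right_of_disjoint_sup_left ?_ ?_)
  · exact (iSupIndep_Vsig K V σ).mono inf_le_right inf_le_right
  · exact (hind pq).mono_left (sup_le inf_le_left inf_le_left)

lemma iSup_inf_Vsig [FiniteDimensional ℚ V] (Vpq : ℕ → ℕ → Submodule ℂ (ℂ ⊗[ℚ] V))
    (htop : ⨆ pq : ℕ × ℕ, Vpq pq.1 pq.2 = ⊤)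
    (hKst : ∀ (x : K) (p q : ℕ), Submodule.map (actK K V x) (Vpq p q) ≤ Vpq p q) :
    ⨆ i, bipiece K V Vpq i = ⊤ := by
  rw [eq_top_iff, ← htop]
  refine iSup_le fun pq => ?_
  rw [eq_iSup_inf_Vsig K V (Vpq pq.1 pq.2) fun x => hKst x _ _]
  exact iSup_le fun σ => le_iSup (bipiece K V Vpq) (pq, σ)

/-- Grouping an independent family of submodules along the fibers of a map gives an independent
family. -/
lemma iSupIndep_fibers {R M ι κ : Type*} [Ring R] [AddCommGroup M] [Module R M]
    {t : ι → Submodule R M} (ht : iSupIndep t) (f : ι → κ) :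
    iSupIndep fun a => ⨆ i ∈ f ⁻¹' {a}, t i := by
  intro a
  have hle : (⨆ b, ⨆ (_ : b ≠ a), ⨆ i ∈ f ⁻¹' {b}, t i) ≤ ⨆ i ∈ {i | f i ≠ a}, t i := by
    refine iSup₂_le fun b hb => iSup₂_le fun i hi => ?_
    have hi' : f i = b := hi
    exact le_iSup₂_of_le (f := fun i (_ : i ∈ {i | f i ≠ a}) => t i) i (by simpa [hi']) le_rfl
  refine Disjoint.mono_right hle ?_
  refine ht.disjoint_biSup_biSup ?_
  exact Set.disjoint_left.2 fun i h h' => h' h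

lemma negHalfTwistPiece_eq (Sg : Set (K →+* ℂ))
    (hSg : ∀ σ : K →+* ℂ, Xor' (σ ∈ Sg) ((starRingEnd ℂ).comp σ ∈ Sg))
    (Vpq : ℕ → ℕ → Submodule ℂ (ℂ ⊗[ℚ] V)) (r s : ℕ) :
    negHalfTwistPiece K V Vpq Sg r s =
      ⨆ i ∈ twistDeg Sg ⁻¹' {(r, s)}, bipiece K V Vpq i := by
  apply le_antisymm
  · refine sup_le ?_ ?_
    · rcases r with _ | r
      · simp
      · refine iSup₂_le fun σ hσ => ?_
        refine le_iSup₂_of_le (f := fun i (_ : i ∈ twistDeg Sg ⁻¹' {(r + 1, s)}) =>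
          bipiece K V Vpq i) ((r, s), σ) ?_ le_rfl
        simp [twistDeg, hσ]
    · rcases s with _ | s
      · simp
      · refine iSup₂_le fun σ hσ => ?_
        have hσ' : σ ∉ Sg := fun h => (hSg σ).elim (fun h' => h'.2 hσ) (fun h' => h'.2 h)
        refine le_iSup₂_of_le (f := fun i (_ : i ∈ twistDeg Sg ⁻¹' {(r, s + 1)}) =>
          bipiece K V Vpq i) ((r, s), σ) ?_ le_rfl
        simp [twistDeg, hσ']
  · refine iSup₂_le ?_
    rintro ⟨⟨p, q⟩, σ⟩ hi
    by_cases hσ : σ ∈ Sg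
    · obtain ⟨rfl, rfl⟩ : p + 1 = r ∧ q = s := by simpa [twistDeg, hσ] using hi
      refine le_sup_of_le_left ?_
      rw [if_neg (Nat.succ_ne_zero p)]
      exact le_iSup₂_of_le (f := fun σ (_ : σ ∈ Sg) => Vpq p q ⊓ Vsig K V σ) σ hσ le_rfl
    · obtain ⟨rfl, rfl⟩ : p = r ∧ q + 1 = s := by simpa [twistDeg, hσ] using hi
      refine le_sup_of_le_right ?_
      have hσ' : (starRingEnd ℂ).comp σ ∈ Sg :=
        (hSg σ).elim (fun h' => absurd h'.1 hσ) (fun h' => h'.1)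
      rw [if_neg (Nat.succ_ne_zero q)]
      exact le_iSup₂_of_le (f := fun σ (_ : σ ∈ {σ | (starRingEnd ℂ).comp σ ∈ Sg}) =>
        Vpq p q ⊓ Vsig K V σ) σ hσ' le_rfl

end Helpers

/-! ### Conjugation -/

section Conjugation

variable (K : Type*) [Field K] [NumberField K]
  (V : Type*) [AddCommGroup V] [Module ℚ V]

lemma cmap_smul (a : ℂ) (v : ℂ ⊗[ℚ] V) : cmap V (a • v) = starRingEnd ℂ a • cmap V v := by
  induction v with
  | zero => simp
  | tmul z v => simp [cmap, TensorProduct.smul_tmul']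
  | add x y hx hy => simp only [smul_add, map_add, hx, hy]

lemma cmap_cmap (v : ℂ ⊗[ℚ] V) : cmap V (cmap V v) = v := by
  induction v with
  | zero => simp
  | tmul z v => simp [cmap]
  | add x y hx hy => simp only [map_add, hx, hy]

/-- The conjugation `c`, as a conjugate-linear map over `ℂ`. -/
def cmapₛₗ : (ℂ ⊗[ℚ] V) →ₛₗ[starRingEnd ℂ] (ℂ ⊗[ℚ] V) where
  toFun := cmap V
  map_add' := map_add _
  map_smul' := cmap_smul V

variable [Module K V] [IsScalarTower ℚ K V]

lemma actK_cmap (x : K) (v : ℂ ⊗[ℚ] V) : actK K V x (cmap V v) = cmap V (actK K V x v) := by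
  induction v with
  | zero => simp
  | tmul z v => simp [cmap, actK]
  | add x y hx hy => simp only [map_add, hx, hy]

lemma cmap_mem_Vsig {σ : K →+* ℂ} {v : ℂ ⊗[ℚ] V} (hv : v ∈ Vsig K V σ) :
    cmap V v ∈ Vsig K V ((starRingEnd ℂ).comp σ) := by
  rw [mem_Vsig] at hv ⊢
  intro x
  rw [actK_cmap, hv, cmap_smul]
  rfl

/-- Conjugation maps `W^{r,s}` into `W^{s,r}`. -/
lemma cmap_mem_negHalfTwistPiece (Sg : Set (K →+* ℂ))
    (hSg : ∀ σ : K →+* ℂ, Xor' (σ ∈ Sg) ((starRingEnd ℂ).comp σ ∈ Sg))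
    (Vpq : ℕ → ℕ → Submodule ℂ (ℂ ⊗[ℚ] V))
    (hcon : ∀ p q, Submodule.map (cmap V) ((Vpq p q).restrictScalars ℚ) =
      (Vpq q p).restrictScalars ℚ) (r s : ℕ) {v : ℂ ⊗[ℚ] V}
    (hv : v ∈ negHalfTwistPiece K V Vpq Sg r s) :
    cmap V v ∈ negHalfTwistPiece K V Vpq Sg s r := by
  suffices h : negHalfTwistPiece K V Vpq Sg r s ≤
      (negHalfTwistPiece K V Vpq Sg s r).comap (cmapₛₗ V) from h hv
  rw [negHalfTwistPiece_eq K V Sg hSg, negHalfTwistPiece_eq K V Sg hSg]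
  refine iSup₂_le ?_
  rintro ⟨⟨p, q⟩, σ⟩ hi w hw
  have hw' : cmap V w ∈ bipiece K V Vpq ((q, p), (starRingEnd ℂ).comp σ) := by
    refine ⟨?_, cmap_mem_Vsig K V hw.2⟩
    have h : cmap V w ∈ (Vpq q p).restrictScalars ℚ :=
      hcon p q ▸ Submodule.mem_map_of_mem (f := cmap V) (p := (Vpq p q).restrictScalars ℚ) hw.1
    exact h
  refine Submodule.mem_iSup_of_mem _ (Submodule.mem_iSup_of_mem ?_ hw')
  rcases hSg σ with ⟨h, h'⟩ | ⟨h, h'⟩ <;>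
    simpa [twistDeg, h, h', and_comm] using hi

end Conjugation

/-- for a rational Hodge structure `V` of weight `k` of CM-type
with CM field `K` and CM-type `Σ`, the subspaces
`W^{r,s} = V^{r-1,s}_Σ ⊕ V^{r,s-1}_{Σ̄}` (for `r + s = k + 1`) define a rational
Hodge structure of weight `k+1` of CM-type with field `K` on `V`:
they give a direct sum decomposition of `V_ℂ`, conjugation maps `W^{r,s}` onto
`W^{s,r}`, and each `W^{r,s}` is stable under the `K`-action. -/
theorem negHalfTwist_isHodgeStructure
    -- `K` is a CM field (number field with complex conjugation `conj ≠ id`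
    -- satisfying `σ(conj x) = star (σ x)` for every embedding `σ`):
    (K : Type*) [Field K] [NumberField K]
    (conj : K ≃ₐ[ℚ] K) (hconj : ∀ (σ : K →+* ℂ) (x : K), σ (conj x) = starRingEnd ℂ (σ x))
    (hconj_ne : conj ≠ AlgEquiv.refl)
    -- `Σ` is a CM-type of `K`:
    (Sg : Set (K →+* ℂ))
    (hSg : ∀ σ : K →+* ℂ, Xor' (σ ∈ Sg) ((starRingEnd ℂ).comp σ ∈ Sg))
    -- `V` is a rational Hodge structure of weight `k`, of CM-type with field `K`:
    (V : Type*) [AddCommGroup V] [Module ℚ V] [Module K V] [IsScalarTower ℚ K V]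
    [FiniteDimensional ℚ V]
    (k : ℕ) (Vpq : ℕ → ℕ → Submodule ℂ (ℂ ⊗[ℚ] V))
    (hbot : ∀ p q, p + q ≠ k → Vpq p q = ⊥)
    (hint : DirectSum.IsInternal (fun pq : ℕ × ℕ => Vpq pq.1 pq.2))
    (hcon : ∀ p q, Submodule.map (cmap V) ((Vpq p q).restrictScalars ℚ) =
      (Vpq q p).restrictScalars ℚ)
    (hKst : ∀ (x : K) (p q : ℕ), Submodule.map (actK K V x) (Vpq p q) ≤ Vpq p q) :
    -- the `W^{r,s}` form a Hodge structure of weight `k+1` of CM-type with field `K`: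
    (∀ r s, r + s ≠ k + 1 → negHalfTwistPiece K V Vpq Sg r s = ⊥) ∧
    DirectSum.IsInternal (fun rs : ℕ × ℕ => negHalfTwistPiece K V Vpq Sg rs.1 rs.2) ∧
    (∀ r s, Submodule.map (cmap V) ((negHalfTwistPiece K V Vpq Sg r s).restrictScalars ℚ) =
      (negHalfTwistPiece K V Vpq Sg s r).restrictScalars ℚ) ∧
    (∀ (x : K) (r s : ℕ), Submodule.map (actK K V x) (negHalfTwistPiece K V Vpq Sg r s) ≤
      negHalfTwistPiece K V Vpq Sg r s) := by
  have hW := negHalfTwistPiece_eq K V Sg hSg Vpq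
  refine ⟨fun r s hrs => ?_, ?_, fun r s => le_antisymm ?_ fun v hv => ?_, fun x r s => ?_⟩
  · rw [hW, eq_bot_iff]
    refine iSup₂_le ?_
    rintro ⟨⟨p, q⟩, σ⟩ hi
    have hpq : p + q ≠ k := by
      rintro rfl
      apply hrs
      by_cases hσ : σ ∈ Sg
      · obtain ⟨rfl, rfl⟩ : p + 1 = r ∧ q = s := by simpa [twistDeg, hσ] using hi
        omega
      · obtain ⟨rfl, rfl⟩ : p = r ∧ q + 1 = s := by simpa [twistDeg, hσ] using hi
        omega
    exact inf_le_left.trans (hbot p q hpq).le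
  · rw [DirectSum.isInternal_submodule_iff_iSupIndep_and_iSup_eq_top] at hint ⊢
    simp only [hW]
    refine ⟨iSupIndep_fibers (iSupIndep_inf_Vsig K V Vpq hint.1) (twistDeg Sg), ?_⟩
    rw [eq_top_iff, ← iSup_inf_Vsig K V Vpq hint.2 hKst]
    refine iSup_le fun i => le_iSup_of_le (twistDeg Sg i) ?_
    exact le_iSup₂_of_le (f := fun j (_ : j ∈ twistDeg Sg ⁻¹' {twistDeg Sg i}) =>
      bipiece K V Vpq j) i rfl le_rfl
  · rintro _ ⟨v, hv, rfl⟩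
    exact cmap_mem_negHalfTwistPiece K V Sg hSg Vpq hcon r s hv
  · exact ⟨cmap V v, cmap_mem_negHalfTwistPiece K V Sg hSg Vpq hcon s r hv, cmap_cmap V v⟩
  · rw [hW, Submodule.map_le_iff_le_comap]
    refine iSup₂_le fun i hi v hv => ?_
    refine Submodule.mem_iSup_of_mem i (Submodule.mem_iSup_of_mem hi ?_)
    -- `x` acts on `V_σ` by the scalar `σ x`.
    rw [(mem_Vsig K V).1 hv.2 x]
    exact Submodule.smul_mem _ _ hv
end
end

section
/- Let V be a finite-dimensional ℚ-vector space, ψ : V × V → ℚ a nondegenerate symmetric bilinear form, d > 0 a rational number, and φ an endomorphism of V with φ² = -d·id and ψ(φv, w) = -ψ(v, φw) for all v, w. Then dim_ℚ V = 2m is even and there exist e₁, …, e_m ∈ V such that (e₁, …, e_m, φe₁, …, φe_m) is a ψ-orthogonal basis of V with ψ(φe_i, φe_i) = d·ψ(e_i, e_i) for each i. If moreover the extension of ψ to V ⊗_ℚ ℝ is negative definite on some 2-dimensional subspace and positive definite on its ψ-orthogonal complement, then the e_i can be chosen so that in addition ψ(e₁, e₁) < 0 and ψ(e_i, e_i) >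 0 for 2 ≤ i ≤ m; in this basis ψ(x,x) = Σ_{i=1}^m d_i x_i² + d·Σ_{i=1}^m d_i x_{m+i}² with d_i := ψ(e_i,e_i), d₁ < 0 and d₂, …, d_m > 0. -/
/-!
Call vectors `e₁, …, e_k` an orthogonal family if they are anisotropic and
`e₁, …, e_k, φ e₁, …, φ e_k` are pairwise `ψ`-orthogonal. Antisymmetry of `φ` gives
`ψ(v, φ v) = 0` and `ψ(φ v, φ w) = d ψ(v, w)`, so these `2k` vectors are anisotropic and hence
linearly independent. If they do not span, the orthogonal complement of their span is nonzero,
`φ`-stable and nondegenerate, so by polarization it contains an anisotropic vector that can be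
appended (`IsOrthoFamily.extend`). As the length is bounded by `dim V`, some family gives a basis.

The sign statement is Sylvester's law of inertia. Over `ℝ`, three negative vectors in an
orthogonal basis would have a nonzero combination orthogonal to the plane `P`, where `ψ` is
positive (`not_three_neg`); and some basis vector is negative because `P ≠ 0` (`exists_neg`).
Since `e_i` and `φ e_i` have the same sign, exactly one `e_i` is negative, and a transposition
moves it to the first place.
-/

open Module

noncomputable section

/-- The vectors `e i`, `φ (e i)` are pairwise `ψ`-orthogonal, and every `e i` is anisotropic.
Orthogonality of `φ (e i)` and `φ (e j)` is not recorded, since it follows from that of `e i` and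
`e j` when `φ² = -d` and `φ` is anti-self-adjoint. -/
structure IsOrthoFamily {V : Type*} [AddCommGroup V] [Module ℚ V]
    (ψ : V →ₗ[ℚ] V →ₗ[ℚ] ℚ) (φ : V →ₗ[ℚ] V) {k : ℕ} (e : Fin k → V) : Prop where
  ortho : ∀ i j, i ≠ j → ψ (e i) (e j) = 0
  ortho_phi : ∀ i j, ψ (e i) (φ (e j)) = 0
  ne_zero : ∀ i, ψ (e i) (e i) ≠ 0

section Family

variable {V : Type*} [AddCommGroup V] [Module ℚ V]
  {ψ : V →ₗ[ℚ] V →ₗ[ℚ] ℚ} {d : ℚ} {φ : V →ₗ[ℚ] V}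

theorem psi_phi_phi (hφ : ∀ v : V, φ (φ v) = -(d • v))
    (hanti : ∀ v w : V, ψ (φ v) w = -ψ v (φ w)) (v w : V) :
    ψ (φ v) (φ w) = d * ψ v w := by
  rw [hanti, hφ]; simp

theorem psi_phi_self (hsym : ∀ v w : V, ψ v w = ψ w v)
    (hanti : ∀ v w : V, ψ (φ v) w = -ψ v (φ w)) (v : V) :
    ψ v (φ v) = 0 := by
  have h1 := hanti v v
  have h2 := hsym (φ v) v
  linarith

theorem IsOrthoFamily.pairwise (hsym : ∀ v w : V, ψ v w = ψ w v)
    (hφ : ∀ v : V, φ (φ v) = -(d • v))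
    (hanti : ∀ v w : V, ψ (φ v) w = -ψ v (φ w)) {k : ℕ} {e : Fin k → V}
    (he : IsOrthoFamily ψ φ e) (j l : Fin k ⊕ Fin k) (hjl : j ≠ l) :
    ψ (Sum.elim e (φ ∘ e) j) (Sum.elim e (φ ∘ e) l) = 0 := by
  rcases j with i | i <;> rcases l with j | j
  · exact he.ortho i j (by simpa using hjl)
  · exact he.ortho_phi i j
  · rw [hsym]; exact he.ortho_phi j i
  · simp [psi_phi_phi hφ hanti, he.ortho i j (by simpa using hjl)]

theorem IsOrthoFamily.elim_ne_zero (hd : 0 < d)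
    (hφ : ∀ v : V, φ (φ v) = -(d • v))
    (hanti : ∀ v w : V, ψ (φ v) w = -ψ v (φ w)) {k : ℕ} {e : Fin k → V}
    (he : IsOrthoFamily ψ φ e) (j : Fin k ⊕ Fin k) :
    ψ (Sum.elim e (φ ∘ e) j) (Sum.elim e (φ ∘ e) j) ≠ 0 := by
  rcases j with i | i
  · exact he.ne_zero i
  · simp [psi_phi_phi hφ hanti, he.ne_zero i, hd.ne']

theorem IsOrthoFamily.linearIndependent (hsym : ∀ v w : V, ψ v w = ψ w v)
    (hd : 0 < d) (hφ : ∀ v : V, φ (φ v) = -(d • v))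
    (hanti : ∀ v w : V, ψ (φ v) w = -ψ v (φ w)) {k : ℕ} {e : Fin k → V}
    (he : IsOrthoFamily ψ φ e) : LinearIndependent ℚ (Sum.elim e (φ ∘ e)) :=
  LinearMap.BilinForm.linearIndependent_of_iIsOrtho (B := ψ)
    (fun i j hij => he.pairwise hsym hφ hanti i j hij)
    (fun i h => he.elim_ne_zero hd hφ hanti i h)

/-- The extension step: an orthogonal family that does not span can be lengthened, by an
anisotropic vector of the orthogonal complement. -/
theorem IsOrthoFamily.extend (hsym : ∀ v w : V, ψ v w = ψ w v)
    (hnd : ∀ v : V, (∀ w : V, ψ v w = 0) → v = 0)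
    (hd : 0 < d) (hφ : ∀ v : V, φ (φ v) = -(d • v))
    (hanti : ∀ v w : V, ψ (φ v) w = -ψ v (φ w)) {k : ℕ} {e : Fin k → V}
    (he : IsOrthoFamily ψ φ e) (hspan : Submodule.span ℚ (Set.range (Sum.elim e (φ ∘ e))) ≠ ⊤) :
    ∃ e' : Fin (k + 1) → V, IsOrthoFamily ψ φ e' := by
  set b := Sum.elim e (φ ∘ e) with hb
  -- `p` is the orthogonal projection onto the complement of the span of `b`
  let q : V → V := fun v => ∑ j, (ψ (b j) v / ψ (b j) (b j)) • b j
  let p : V → V := fun v => v - q v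
  have hp : ∀ v j, ψ (b j) (p v) = 0 := by
    intro v j
    simp only [p, q, map_sub, map_sum, map_smul, smul_eq_mul]
    rw [Finset.sum_eq_single j]
    · rw [div_mul_cancel₀ _ (he.elim_ne_zero hd hφ hanti j), sub_self]
    · intro l _ hl
      rw [he.pairwise hsym hφ hanti j l hl.symm, mul_zero]
    · simp
  have hq : ∀ v w, ψ (p v) (q w) = 0 := by
    intro v w
    simp only [q, map_sum, map_smul]
    refine Finset.sum_eq_zero fun j _ => ?_
    rw [hsym (p v), hp, smul_zero]
  have hqmem : ∀ v, q v ∈ Submodule.span ℚ (Set.range b) := fun v =>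
    Submodule.sum_mem _ fun j _ => Submodule.smul_mem _ _ (Submodule.subset_span ⟨j, rfl⟩)
  obtain ⟨v, hv⟩ : ∃ v, p v ≠ 0 := by
    by_contra! h
    refine hspan (eq_top_iff.2 fun v _ => ?_)
    rw [sub_eq_zero.1 (h v)]
    exact hqmem v
  obtain ⟨w, hw⟩ : ∃ w, ψ (p v) w ≠ 0 := by
    by_contra! h
    exact hv (hnd _ h)
  have hw' : ψ (p v) (p w) ≠ 0 := by
    have : ψ (p v) (p w) = ψ (p v) w - ψ (p v) (q w) := map_sub _ _ _
    rwa [this, hq, sub_zero]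
  -- by polarization one of `p v`, `p w`, `p v + p w` is anisotropic
  obtain ⟨u, hu, huu⟩ : ∃ u, (∀ j, ψ (b j) u = 0) ∧ ψ u u ≠ 0 := by
    by_cases h1 : ψ (p v) (p v) = 0
    · by_cases h2 : ψ (p w) (p w) = 0
      · refine ⟨p v + p w, fun j => by rw [map_add, hp, hp, add_zero], ?_⟩
        simp only [map_add, LinearMap.add_apply, h1, h2, hsym (p w) (p v)]
        simpa using hw'
      · exact ⟨p w, hp w, h2⟩
    · exact ⟨p v, hp v, h1⟩
  have hl : ∀ i, ψ (e i) u = 0 := fun i => hu (Sum.inl i)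
  have hr : ∀ i, ψ (φ (e i)) u = 0 := fun i => hu (Sum.inr i)
  refine ⟨Fin.snoc e u, ⟨fun i j => ?_, fun i j => ?_, fun i => ?_⟩⟩
  · induction i using Fin.lastCases <;> induction j using Fin.lastCases
    · simp
    · simp [hsym u, hl]
    · simp [hl]
    · simpa using he.ortho _ _
  · induction i using Fin.lastCases <;> induction j using Fin.lastCases
    · simpa using psi_phi_self hsym hanti u
    · simp [hsym u, hr]
    · simpa [hr] using hanti (e _) u
    · simpa using he.ortho_phi _ _
  · induction i using Fin.lastCases
    · simpa using huu
    · simpa using he.ne_zero _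

/-- Linear independence bounds the length of an orthogonal family, so extension must stop at a
spanning one. -/
theorem exists_orthoFamily_span_eq_top [FiniteDimensional ℚ V]
    (hsym : ∀ v w : V, ψ v w = ψ w v)
    (hnd : ∀ v : V, (∀ w : V, ψ v w = 0) → v = 0)
    (hd : 0 < d) (hφ : ∀ v : V, φ (φ v) = -(d • v))
    (hanti : ∀ v w : V, ψ (φ v) w = -ψ v (φ w)) :
    ∃ (m : ℕ) (e : Fin m → V), IsOrthoFamily ψ φ e ∧
      Submodule.span ℚ (Set.range (Sum.elim e (φ ∘ e))) = ⊤ := by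
  by_contra! h
  have key : ∀ k : ℕ, ∃ e : Fin k → V, IsOrthoFamily ψ φ e := by
    intro k
    induction k with
    | zero => exact ⟨Fin.elim0, ⟨fun i => i.elim0, fun i => i.elim0, fun i => i.elim0⟩⟩
    | succ k ih =>
      obtain ⟨e, he⟩ := ih
      exact he.extend hsym hnd hd hφ hanti (h k e he)
  obtain ⟨e, he⟩ := key (finrank ℚ V + 1)
  have := (he.linearIndependent hsym hd hφ hanti).fintype_card_le_finrank
  simp at this
  omega

end Family

/-- A bilinear form is a weighted sum of squares on combinations of an orthogonal family. -/
theorem form_sum_smul_of_ortho {K M ι : Type*} [Field K] [AddCommGroup M] [Module K M] [Fintype ι]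
    (β : M →ₗ[K] M →ₗ[K] K) (b : ι → M) (hb : ∀ j l, j ≠ l → β (b j) (b l) = 0) (c : ι → K) :
    β (∑ j, c j • b j) (∑ j, c j • b j) = ∑ j, β (b j) (b j) * c j ^ 2 := by
  simp only [map_sum, LinearMap.sum_apply, map_smul, LinearMap.smul_apply, smul_eq_mul]
  refine Finset.sum_congr rfl fun j _ => ?_
  rw [Finset.sum_eq_single j]
  · ring
  · intro l _ hl
    rw [hb l j hl]; simp
  · simp

section Signature

variable {M ι : Type*} [AddCommGroup M] [Module ℝ M]
  (β : M →ₗ[ℝ] M →ₗ[ℝ] ℝ) (b : Basis ι ℝ M) (P : Submodule ℝ M)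

/-- If `β` is positive on the orthogonal complement of a plane `P`, then an orthogonal basis
cannot contain three negative vectors: a combination of them is orthogonal to `P`. -/
theorem not_three_neg (hb : ∀ j l, j ≠ l → β (b j) (b l) = 0) (hP : finrank ℝ P = 2)
    (hpos : ∀ v, (∀ p ∈ P, β p v = 0) → v ≠ 0 → 0 < β v v)
    (s : Fin 3 → ι) (hs : Function.Injective s) (hneg : ∀ t, β (b (s t)) (b (s t)) < 0) :
    False := by
  have : FiniteDimensional ℝ P := FiniteDimensional.of_finrank_pos (by omega)
  let F : (Fin 3 → ℝ) →ₗ[ℝ] Dual ℝ P :=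
    ((β.domRestrict P).flip) ∘ₗ Fintype.linearCombination ℝ (b ∘ s)
  have hker : LinearMap.ker F ≠ ⊥ := by
    apply LinearMap.ker_ne_bot_of_finrank_lt
    rw [Subspace.dual_finrank_eq, hP]; simp
  obtain ⟨c, hc, hc0⟩ := Submodule.exists_mem_ne_zero_of_ne_bot hker
  have hli : LinearIndependent ℝ (b ∘ s) := b.linearIndependent.comp s hs
  have hv0 : ∑ t, c t • (b ∘ s) t ≠ 0 := by
    intro h
    exact hc0 (funext fun t => Fintype.linearIndependent_iff.1 hli c h t)
  have h1 := hpos (∑ t, c t • (b ∘ s) t) (fun p hp => by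
    have := LinearMap.congr_fun (LinearMap.mem_ker.1 hc) ⟨p, hp⟩
    simpa [F, Fintype.linearCombination_apply] using this) hv0
  rw [form_sum_smul_of_ortho β (b ∘ s) (fun j l h => hb _ _ (hs.ne h))] at h1
  exact absurd h1 (not_lt.2 (Finset.sum_nonpos fun t _ =>
    mul_nonpos_of_nonpos_of_nonneg (hneg t).le (sq_nonneg _)))

theorem exists_neg [Fintype ι] (hb : ∀ j l, j ≠ l → β (b j) (b l) = 0) (hP : finrank ℝ P = 2)
    (hneg : ∀ v ∈ P, v ≠ 0 → β v v < 0) : ∃ j, β (b j) (b j) < 0 := by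
  by_contra! h
  have : P ≠ ⊥ := by rintro rfl; simp at hP
  obtain ⟨v, hv, hv0⟩ := Submodule.exists_mem_ne_zero_of_ne_bot this
  have h1 := hneg v hv hv0
  rw [← b.sum_repr v, form_sum_smul_of_ortho β _ hb] at h1
  exact absurd h1 (not_lt.2 (Finset.sum_nonneg fun t _ => mul_nonneg (h t) (sq_nonneg _)))

end Signature

theorem vec_inl_inr_inl_injective {α : Type*} {a b : α} (hab : a ≠ b) :
    Function.Injective (![Sum.inl a, Sum.inr a, Sum.inl b] : Fin 3 → α ⊕ α) := by
  intro s t hst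
  fin_cases s <;> fin_cases t <;> simp_all [Ne.symm hab]

/-- let `V` be a finite-dimensional `ℚ`-vector space with a
nondegenerate symmetric bilinear form `ψ`, `d > 0` rational, and `φ` an
endomorphism with `φ² = -d·id` and `ψ(φv,w) = -ψ(v,φw)`.  Then `dim V = 2m` and
there is a `ψ`-orthogonal basis `(e₁,…,e_m,φe₁,…,φe_m)` of `V` with
`ψ(φeᵢ,φeᵢ) = d·ψ(eᵢ,eᵢ)`; and if moreover `ψ` over `ℝ` is negative definite on
a 2-dimensional subspace and positive definite on its orthogonal complement,
the `eᵢ` may be chosen with `ψ(e₁,e₁) < 0` and `ψ(eᵢ,eᵢ) > 0` for `i ≥ 2`, so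
that `ψ(x,x) = Σ dᵢxᵢ² + d·Σ dᵢx_{m+i}²` with `d₁ < 0 < d₂, …, d_m`. -/
theorem orthogonal_basis_for_antiinvolution
    (V : Type*) [AddCommGroup V] [Module ℚ V] [FiniteDimensional ℚ V]
    (ψ : V →ₗ[ℚ] V →ₗ[ℚ] ℚ)
    (hsym : ∀ v w : V, ψ v w = ψ w v)
    (hnd : ∀ v : V, (∀ w : V, ψ v w = 0) → v = 0)
    (d : ℚ) (hd : 0 < d)
    (φ : V →ₗ[ℚ] V) (hφ : ∀ v : V, φ (φ v) = -(d • v))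
    (hanti : ∀ v w : V, ψ (φ v) w = -ψ v (φ w)) :
    ∃ m : ℕ, finrank ℚ V = 2 * m ∧
      (∃ (e : Fin m → V) (B : Basis (Fin m ⊕ Fin m) ℚ V),
        (∀ i, B (Sum.inl i) = e i) ∧ (∀ i, B (Sum.inr i) = φ (e i)) ∧
        (∀ j l, j ≠ l → ψ (B j) (B l) = 0) ∧
        (∀ i, ψ (φ (e i)) (φ (e i)) = d * ψ (e i) (e i))) ∧
      -- if `ψ` has signature `(2-, (2m-2)+)` over `ℝ`:
      ((∃ P : Submodule ℝ (TensorProduct ℚ ℝ V),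
          finrank ℝ P = 2 ∧
          (∀ v ∈ P, v ≠ 0 → LinearMap.BilinForm.baseChange ℝ ψ v v < 0) ∧
          (∀ v : TensorProduct ℚ ℝ V, (∀ p ∈ P, LinearMap.BilinForm.baseChange ℝ ψ p v = 0) →
            v ≠ 0 → 0 < LinearMap.BilinForm.baseChange ℝ ψ v v)) →
        ∃ (e : Fin m → V) (B : Basis (Fin m ⊕ Fin m) ℚ V),
          (∀ i, B (Sum.inl i) = e i) ∧ (∀ i, B (Sum.inr i) = φ (e i)) ∧
          (∀ j l, j ≠ l → ψ (B j) (B l) = 0) ∧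
          (∀ i, ψ (φ (e i)) (φ (e i)) = d * ψ (e i) (e i)) ∧
          (∀ i : Fin m, (i.val = 0 → ψ (e i) (e i) < 0) ∧
            (i.val ≠ 0 → 0 < ψ (e i) (e i))) ∧
          (∀ c : Fin m ⊕ Fin m → ℚ,
            ψ (∑ j, c j • B j) (∑ j, c j • B j) =
              (∑ i, ψ (e i) (e i) * (c (Sum.inl i)) ^ 2) +
                d * ∑ i, ψ (e i) (e i) * (c (Sum.inr i)) ^ 2)) := by
  classical
  obtain ⟨m, e, he, hspan⟩ := exists_orthoFamily_span_eq_top hsym hnd hd hφ hanti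
  let B : Basis (Fin m ⊕ Fin m) ℚ V :=
    Basis.mk (he.linearIndependent hsym hd hφ hanti) hspan.ge
  have hB : ∀ j, B j = Sum.elim e (φ ∘ e) j := fun j => Basis.mk_apply _ _ j
  have hBo : ∀ j l, j ≠ l → ψ (B j) (B l) = 0 := fun j l h => by
    rw [hB, hB]; exact he.pairwise hsym hφ hanti j l h
  have hdd : ∀ v, ψ (φ v) (φ v) = d * ψ v v := fun v => psi_phi_phi hφ hanti v v
  refine ⟨m, ?_, ⟨e, B, fun i => hB _, fun i => hB _, hBo, fun i => hdd _⟩, ?_⟩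
  · rw [finrank_eq_card_basis B]; simp; ring
  rintro ⟨P, hP, hPneg, hPpos⟩
  let R : Basis (Fin m ⊕ Fin m) ℝ (TensorProduct ℚ ℝ V) := B.baseChange ℝ
  have hR : ∀ j l, LinearMap.BilinForm.baseChange ℝ ψ (R j) (R l) = (ψ (B j) (B l) : ℝ) := by
    intro j l
    rw [Basis.baseChange_apply, Basis.baseChange_apply, LinearMap.BilinForm.baseChange_tmul,
      mul_one, Rat.smul_one_eq_cast]
  have hRo : ∀ j l, j ≠ l → LinearMap.BilinForm.baseChange ℝ ψ (R j) (R l) = 0 := by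
    intro j l h
    rw [hR, hBo j l h, Rat.cast_zero]
  have hinr : ∀ i, ψ (B (Sum.inr i)) (B (Sum.inr i)) = d * ψ (e i) (e i) := fun i => by
    rw [hB]; exact hdd _
  have hinl : ∀ i, ψ (B (Sum.inl i)) (B (Sum.inl i)) = ψ (e i) (e i) := fun i => by
    rw [hB]; rfl
  obtain ⟨i₀, hi₀⟩ : ∃ i, ψ (e i) (e i) < 0 := by
    obtain ⟨j, hj⟩ := exists_neg _ R P hRo hP hPneg
    rw [hR, Rat.cast_lt_zero] at hj
    rcases j with i | i
    · exact ⟨i, by rwa [hinl] at hj⟩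
    · rw [hinr] at hj
      exact ⟨i, by by_contra! h; exact absurd hj (not_lt.2 (mul_nonneg hd.le h))⟩
  have huniq : ∀ i, i ≠ i₀ → 0 < ψ (e i) (e i) := by
    intro i hi
    by_contra hle
    have hlt : ψ (e i) (e i) < 0 := lt_of_le_of_ne (not_lt.1 hle) (he.ne_zero i)
    refine not_three_neg _ R P hRo hP hPpos ![Sum.inl i₀, Sum.inr i₀, Sum.inl i] ?_ ?_
    · exact vec_inl_inr_inl_injective (Ne.symm hi)
    · intro t
      rw [hR, Rat.cast_lt_zero]
      fin_cases t
      · exact (hinl i₀).trans_lt hi₀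
      · exact (hinr i₀).trans_lt (mul_neg_of_pos_of_neg hd hi₀)
      · exact (hinl i).trans_lt hlt
  let z : Fin m := ⟨0, i₀.pos⟩
  let σ : Equiv.Perm (Fin m) := Equiv.swap z i₀
  let B' : Basis (Fin m ⊕ Fin m) ℚ V := B.reindex (Equiv.sumCongr σ σ).symm
  have hB' : ∀ j, B' j = B (Equiv.sumCongr σ σ j) := fun j => by
    simp only [B', Basis.reindex_apply, Equiv.symm_symm]
  have hl : ∀ i, B' (Sum.inl i) = e (σ i) := fun i => by rw [hB', hB]; rfl
  have hr : ∀ i, B' (Sum.inr i) = φ (e (σ i)) := fun i => by rw [hB', hB]; rfl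
  have ho : ∀ j l, j ≠ l → ψ (B' j) (B' l) = 0 := fun j l h => by
    rw [hB', hB']; exact hBo _ _ ((Equiv.sumCongr σ σ).injective.ne h)
  refine ⟨e ∘ σ, B', hl, hr, ho, fun i => hdd _, fun i => ⟨fun h => ?_, fun h => ?_⟩, fun c => ?_⟩
  · obtain rfl : i = z := Fin.ext h
    simpa [σ] using hi₀
  · refine huniq _ fun h' => h ?_
    have : i = z := σ.injective (h'.trans (Equiv.swap_apply_left z i₀).symm)
    rw [this]
  · rw [form_sum_smul_of_ortho ψ B' ho, Fintype.sum_sum_type, Finset.mul_sum]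
    simp only [hl, hr, hdd, Function.comp_apply, mul_assoc]
end
end

section
/- Let k be a field of characteristic zero, m ≥ 1, and let Q be the quadratic form on k^{2m} given by Q(y) = Σ_{i=1}^m y_i·y_{m+i}. In the Clifford algebra C(Q), with ι the canonical embedding of k^{2m} and b₁, …, b_{2m} the standard basis vectors, set f := ι(b_{m+1})·ι(b_{m+2})⋯ι(b_{2m}) and h := ι(b₁)·ι(b₂)⋯ι(b_m). Then f·h·f = (-1)^{m(m-1)/2}·f and h·f·h = (-1)^{m(m-1)/2}·h. -/
/-!
Writing `a i = ι(b_{m+i})` and `b i = ι(b_i)`, the generators satisfy: distinct generators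
anticommute, except that `a i * b i + b i * a i = 1`, and all squares vanish. The identity
`f h f = ± f` follows from these relations by induction on the number of factors
(`prod_mul_prod_mul_prod`): write `f = a f₁` and `h = b h₁` with `n` factors in each of `f₁`, `h₁`.
Moving `b` across `f₁` costs `(-1)^n`, moving `a` across `f₁ h₁` costs `(-1)^{2n} = 1`, so
`f h f = (-1)^n (a b a) (f₁ h₁ f₁)`, where `a b a = a (1 - a b) = a`. The signs accumulate to
`(-1)^{0 + 1 + ⋯ + (m-1)} = (-1)^{m(m-1)/2}`. The relations are symmetric in `a` and `b`, which
gives `h f h = ± h` as well.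
-/

noncomputable section

/-- The hyperbolic quadratic form `Q(y) = Σ_{i=1}^m y_i·y_{m+i}` on `k^{2m}`,
where the coordinates are indexed by `Fin m ⊕ Fin m` (the first `m`
coordinates by `Sum.inl`, the last `m` by `Sum.inr`). -/
def hypQ (k : Type*) [Field k] (m : ℕ) : QuadraticForm k ((Fin m ⊕ Fin m) → k) :=
  (∑ i : Fin m,
    (LinearMap.mul k k).compl₁₂ (LinearMap.proj (Sum.inl i)) (LinearMap.proj (Sum.inr i))
      : LinearMap.BilinMap k ((Fin m ⊕ Fin m) → k) k).toQuadraticMap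

/-- `f := ι(b_{m+1})·ι(b_{m+2})⋯ι(b_{2m})` in the Clifford algebra of `hypQ`. -/
def cliffF (k : Type*) [Field k] (m : ℕ) : CliffordAlgebra (hypQ k m) :=
  ((List.finRange m).map fun i =>
    CliffordAlgebra.ι (hypQ k m) (Pi.single (Sum.inr i) (1 : k))).prod

/-- `h := ι(b₁)·ι(b₂)⋯ι(b_m)` in the Clifford algebra of `hypQ`. -/
def cliffH (k : Type*) [Field k] (m : ℕ) : CliffordAlgebra (hypQ k m) :=
  ((List.finRange m).map fun i =>
    CliffordAlgebra.ι (hypQ k m) (Pi.single (Sum.inl i) (1 : k))).prod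

theorem prod_mul_of_anticomm {A ι : Type*} [Ring A] (g : ι → A) (x : A) (l : List ι)
    (hx : ∀ j ∈ l, g j * x = -(x * g j)) :
    (l.map g).prod * x = (-1) ^ l.length * (x * (l.map g).prod) := by
  induction l with
  | nil => simp
  | cons j t ih =>
    have ht := ih fun i hi => hx i (List.mem_cons_of_mem _ hi)
    have hj := hx j List.mem_cons_self
    simp only [List.map_cons, List.prod_cons, List.length_cons, pow_succ]
    rw [mul_assoc, ht]
    rcases neg_one_pow_eq_or A t.length with h | h <;>
      simp [h, ← mul_assoc, hj]

/-- The identity `f h f = ± f` for products over any duplicate-free list of indices, in an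
arbitrary ring containing elements that satisfy the hyperbolic Clifford relations. -/
theorem prod_mul_prod_mul_prod {A ι : Type*} [Ring A] (a b : ι → A)
    (haa : ∀ i j, i ≠ j → a i * a j = -(a j * a i))
    (hab : ∀ i j, i ≠ j → a i * b j = -(b j * a i))
    (hsq : ∀ i, a i * a i = 0) (hone : ∀ i, a i * b i + b i * a i = 1)
    (l : List ι) (hl : l.Nodup) :
    (l.map a).prod * (l.map b).prod * (l.map a).prod =
      (-1) ^ (l.length.choose 2) * (l.map a).prod := by
  induction l with
  | nil => simp
  | cons i t ih =>
    obtain ⟨hi, ht⟩ := List.nodup_cons.1 hl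
    have ih := ih ht
    have hne : ∀ j ∈ t, j ≠ i := fun j hj h => hi (h ▸ hj)
    have h1 := prod_mul_of_anticomm a (b i) t fun j hj => hab j i (hne j hj)
    have h2 := prod_mul_of_anticomm a (a i) t fun j hj => haa j i (hne j hj)
    have h3 := prod_mul_of_anticomm b (a i) t fun j hj => by
      rw [hab i j (hne j hj).symm, neg_neg]
    have haba : a i * b i * a i = a i := by
      rw [mul_assoc, eq_sub_of_add_eq' (hone i), mul_sub, ← mul_assoc, hsq]
      simp
    simp only [List.map_cons, List.prod_cons, List.length_cons]
    rw [show (t.length + 1).choose 2 = t.length + t.length.choose 2 by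
      rw [Nat.choose_succ_succ', Nat.choose_one_right], pow_add]
    generalize (t.map a).prod = F at *
    generalize (t.map b).prod = H at *
    have hmove : F * H * a i = a i * (F * H) := by
      rw [mul_assoc, h3]
      rcases neg_one_pow_eq_or A t.length with h | h <;> rw [h] at h2 ⊢ <;>
        simp only [one_mul, neg_mul, mul_neg] at h2 ⊢ <;> rw [← mul_assoc, h2] <;>
        simp [mul_assoc]
    calc a i * F * (b i * H) * (a i * F)
        = a i * (F * b i) * H * a i * F := by simp only [mul_assoc]
      _ = (-1) ^ t.length * (a i * b i * (F * H * a i) * F) := by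
          rw [h1]
          rcases neg_one_pow_eq_or A t.length with h | h <;> simp [h, mul_assoc]
      _ = (-1) ^ t.length * (a i * b i * a i * (F * H * F)) := by
          rw [hmove]; simp only [mul_assoc]
      _ = (-1) ^ t.length * (-1) ^ t.length.choose 2 * (a i * F) := by
          rw [haba, ih]
          rcases neg_one_pow_eq_or A (t.length.choose 2) with h | h <;> simp [h]

theorem hypQ_apply (k : Type*) [Field k] (m : ℕ) (y : (Fin m ⊕ Fin m) → k) :
    hypQ k m y = ∑ i, y (Sum.inl i) * y (Sum.inr i) := by
  simp [hypQ]

theorem polar_hypQ (k : Type*) [Field k] (m : ℕ) (x y : (Fin m ⊕ Fin m) → k) :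
    QuadraticMap.polar (hypQ k m) x y =
      ∑ i, (x (Sum.inl i) * y (Sum.inr i) + y (Sum.inl i) * x (Sum.inr i)) := by
  simp only [QuadraticMap.polar, hypQ_apply, ← Finset.sum_sub_distrib, Pi.add_apply]
  exact Finset.sum_congr rfl fun i _ => by ring

/-- in the Clifford algebra of the hyperbolic form
`Q(y) = Σ y_i y_{m+i}` on `k^{2m}`, with `f = ι(b_{m+1})⋯ι(b_{2m})` and
`h = ι(b₁)⋯ι(b_m)`, one has `f·h·f = (-1)^{m(m-1)/2}·f` and
`h·f·h = (-1)^{m(m-1)/2}·h`. -/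
theorem cliff_fhf_eq_sign_smul (k : Type*) [Field k] [CharZero k] (m : ℕ) (hm : 1 ≤ m) :
    cliffF k m * cliffH k m * cliffF k m =
      ((-1 : k) ^ (m * (m - 1) / 2)) • cliffF k m ∧
    cliffH k m * cliffF k m * cliffH k m =
      ((-1 : k) ^ (m * (m - 1) / 2)) • cliffH k m := by
  have hadd := CliffordAlgebra.ι_mul_ι_add_swap (Q := hypQ k m)
  have hsq := CliffordAlgebra.ι_sq_scalar (hypQ k m)
  have hrr : ∀ i j : Fin m, QuadraticMap.polar (hypQ k m)
      (Pi.single (Sum.inr i) 1) (Pi.single (Sum.inr j) 1) = 0 := fun i j => by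
    simp [polar_hypQ]
  have hll : ∀ i j : Fin m, QuadraticMap.polar (hypQ k m)
      (Pi.single (Sum.inl i) 1) (Pi.single (Sum.inl j) 1) = 0 := fun i j => by
    simp [polar_hypQ]
  have hrl : ∀ i j : Fin m, QuadraticMap.polar (hypQ k m)
      (Pi.single (Sum.inr i) 1) (Pi.single (Sum.inl j) 1) = if i = j then 1 else 0 :=
    fun i j => by simp [polar_hypQ, Pi.single_apply]
  have hlr : ∀ i j : Fin m, QuadraticMap.polar (hypQ k m)
      (Pi.single (Sum.inl i) 1) (Pi.single (Sum.inr j) 1) = if i = j then 1 else 0 :=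
    fun i j => by simp [polar_hypQ, Pi.single_apply, eq_comm]
  have hsign : ∀ x : CliffordAlgebra (hypQ k m),
      ((-1 : k) ^ (m * (m - 1) / 2)) • x = (-1) ^ ((List.finRange m).length.choose 2) * x := by
    intro x
    simp [Algebra.smul_def, Nat.choose_two_right]
  rw [hsign, hsign]
  constructor
  · refine prod_mul_prod_mul_prod _ _ (fun i j hij => ?_) (fun i j hij => ?_) (fun i => ?_)
      (fun i => ?_) _ (List.nodup_finRange m)
    · exact eq_neg_of_add_eq_zero_left (by rw [hadd, hrr, map_zero])
    · exact eq_neg_of_add_eq_zero_left (by rw [hadd, hrl, if_neg hij, map_zero])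
    · rw [hsq]; simp [hypQ_apply]
    · rw [hadd, hrl, if_pos rfl, map_one]
  · refine prod_mul_prod_mul_prod _ _ (fun i j hij => ?_) (fun i j hij => ?_) (fun i => ?_)
      (fun i => ?_) _ (List.nodup_finRange m)
    · exact eq_neg_of_add_eq_zero_left (by rw [hadd, hll, map_zero])
    · exact eq_neg_of_add_eq_zero_left (by rw [hadd, hlr, if_neg hij, map_zero])
    · rw [hsq]; simp [hypQ_apply]
    · rw [hadd, hlr, if_pos rfl, map_one]
end
end
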